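/- arXiv:1404.6903 — 2 statements merged into one kernel-verified Lean document; each statement's English description precedes it below -/
import Mathlib

section
/- Let α₁, α₂ ∈ ℝ satisfy 0 < |α₁ + α₂| < 2, and let d be a real number with 0 < d < 2·arctan(√(4/(α₁+α₂)² − 1)). Then for every λ ∈ ℂ with −1 ≤ Im λ ≤ 1, the only twice continuously differentiable function u : [0, d] → ℂ satisfying u''(φ) = λ² · u(φ) for all φ ∈ [0, d], together with the nonlocal boundary conditions u(0) = α₁ · u(d/2) and u(d) = α₂ · u(d/2), is the zero function. -/
/-!
Every solution of `u'' = λ² u` on `[0, d]` is determined by its Cauchy data at the midpoint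
`h = d / 2`: with `S' = cosh (λ ·)`, `S 0 = 0`, one has
`u t = u h * cosh (λ (t - h)) + u' h * S (t - h)`. The proof is that
`φ ↦ u φ * cosh (λ (t - φ)) + u' φ * S (t - φ)` has zero derivative
(`midpoint_representation`). Since `cosh` is even and `S` is odd, adding the boundary conditions
gives `2 u(h) cosh (λ h) = (α₁ + α₂) u(h)`. For `|Im λ| ≤ 1` the real part of `cosh (λ h)` is at
least `cos h`, and the bound on `d` says exactly that `cos h > |α₁ + α₂| / 2`
(`cos_gt_of_lt_arctan`), so `u h = 0`. Then `u d = 0` forces `u' h * S h = 0`, and `S h ≠ 0`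
because `|Im (λ h)| < π / 2` while all zeros of `sinh` other than `0` lie further out on the
imaginary axis.
-/

open Real Complex Set

/-- The solution of `S'' = l² S`, `S 0 = 0`, `S' 0 = 1`, that is `sinh (l x) / l`, continued
by `x` to `l = 0`. -/
noncomputable def sinhDiv (l : ℂ) (x : ℝ) : ℂ :=
  if l = 0 then (x : ℂ) else Complex.sinh (l * x) / l

lemma sinhDiv_zero (l : ℂ) : sinhDiv l 0 = 0 := by
  simp [sinhDiv]

lemma sinhDiv_neg (l : ℂ) (x : ℝ) : sinhDiv l (-x) = -sinhDiv l x := by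
  unfold sinhDiv
  split_ifs
  · simp
  · simp [neg_div]

lemma mul_sinhDiv (l : ℂ) (x : ℝ) : l * sinhDiv l x = Complex.sinh (l * x) := by
  unfold sinhDiv
  split_ifs with h
  · simp [h]
  · field_simp

lemma hasDerivAt_sinhDiv (l : ℂ) (x : ℝ) :
    HasDerivAt (sinhDiv l) (Complex.cosh (l * x)) x := by
  have hx : HasDerivAt (fun y : ℝ => (y : ℂ)) 1 x := Complex.ofRealCLM.hasDerivAt
  by_cases h : l = 0
  · have he : sinhDiv l = fun y : ℝ => (y : ℂ) := by
      funext y; simp [sinhDiv, h]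
    rw [he]
    simpa [h] using hx
  · have he : sinhDiv l = fun y : ℝ => Complex.sinh (l * y) / l := by
      funext y; simp [sinhDiv, h]
    rw [he]
    refine ((((hasDerivAt_id (x : ℂ)).const_mul l).csinh.comp_ofReal).div_const l).congr_deriv ?_
    simp only [id]
    field_simp

lemma hasDerivAt_cosh_mul (l : ℂ) (x : ℝ) :
    HasDerivAt (fun y : ℝ => Complex.cosh (l * y)) (l ^ 2 * sinhDiv l x) x := by
  refine (((hasDerivAt_id (x : ℂ)).const_mul l).ccosh.comp_ofReal).congr_deriv ?_
  simp only [id, ← mul_sinhDiv]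
  ring

/-- A solution of `u'' = l² u` on `[0, d]` in terms of its Cauchy data at any point `h`. -/
lemma midpoint_representation {d : ℝ} (hd0 : 0 < d) {l : ℂ} {u : ℝ → ℂ}
    (hu : ContDiffOn ℝ 2 u (Set.Icc 0 d))
    (heq : ∀ φ ∈ Set.Icc (0 : ℝ) d,
      derivWithin (derivWithin u (Set.Icc 0 d)) (Set.Icc 0 d) φ = l ^ 2 * u φ)
    {h t : ℝ} (hh : h ∈ Set.Icc 0 d) (ht : t ∈ Set.Icc 0 d) :
    u t = u h * Complex.cosh (l * (t - h : ℝ))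
      + derivWithin u (Set.Icc 0 d) h * sinhDiv l (t - h) := by
  have hU : UniqueDiffOn ℝ (Set.Icc (0 : ℝ) d) := uniqueDiffOn_Icc hd0
  have hu1 : DifferentiableOn ℝ u (Set.Icc 0 d) := hu.differentiableOn (by norm_num)
  have hu2 : DifferentiableOn ℝ (derivWithin u (Set.Icc 0 d)) (Set.Icc 0 d) :=
    (hu.derivWithin hU (m := 1) (by norm_num)).differentiableOn (by norm_num)
  set F : ℝ → ℂ := fun φ => u φ * Complex.cosh (l * (t - φ : ℝ))
      + derivWithin u (Set.Icc 0 d) φ * sinhDiv l (t - φ) with hF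
  have hFd : ∀ φ ∈ Set.Icc (0 : ℝ) d, HasDerivWithinAt F 0 (Set.Icc 0 d) φ := by
    intro φ hφ
    have h1 := (hu1 φ hφ).hasDerivWithinAt
    have h2 := (hu2 φ hφ).hasDerivWithinAt
    rw [heq φ hφ] at h2
    have hs : HasDerivAt (fun y : ℝ => t - y) (-1) φ := (hasDerivAt_id φ).const_sub t
    have h3 := ((hasDerivAt_cosh_mul l (t - φ)).scomp φ hs).hasDerivWithinAt (s := Set.Icc 0 d)
    have h4 := ((hasDerivAt_sinhDiv l (t - φ)).scomp φ hs).hasDerivWithinAt (s := Set.Icc 0 d)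
    refine ((h1.mul h3).add (h2.mul h4)).congr_deriv ?_
    simp only [Function.comp_apply, neg_smul, one_smul]
    ring
  have hconst := constant_of_derivWithin_zero (fun φ hφ => (hFd φ hφ).differentiableWithinAt)
    (fun φ hφ => (hFd φ (Set.Ico_subset_Icc_self hφ)).derivWithin
      (hU φ (Set.Ico_subset_Icc_self hφ)))
  have hFt : F t = F h := (hconst t ht).trans (hconst h hh).symm
  simpa [hF, sinhDiv_zero] using hFt

/-- The identity `cos (arctan √(4 / σ² - 1)) = |σ| / 2`, turned into a bound on a symmetric
interval. -/
lemma cos_gt_of_lt_arctan {σ y : ℝ} (h0 : 0 < |σ|) (h2 : |σ| < 2)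
    (hy : |y| < Real.arctan (Real.sqrt (4 / σ ^ 2 - 1))) : |σ| / 2 < Real.cos y := by
  have hσ : 0 < σ ^ 2 := by rw [← sq_abs]; positivity
  have hσ4 : σ ^ 2 < 4 := by rw [← sq_abs]; nlinarith
  have hnn : 0 ≤ 4 / σ ^ 2 - 1 := by
    rw [sub_nonneg, le_div_iff₀ hσ]; linarith
  have hc : Real.cos (Real.arctan (Real.sqrt (4 / σ ^ 2 - 1))) = |σ| / 2 := by
    rw [Real.cos_arctan, Real.sq_sqrt hnn]
    have : 1 + (4 / σ ^ 2 - 1) = (2 / |σ|) ^ 2 := by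
      rw [div_pow, sq_abs]; ring
    rw [this, Real.sqrt_sq (by positivity)]
    field_simp
  rw [← hc, ← Real.cos_abs y]
  refine Real.cos_lt_cos_of_nonneg_of_le_pi (abs_nonneg y) ?_ hy
  linarith [Real.arctan_lt_pi_div_two (Real.sqrt (4 / σ ^ 2 - 1)), Real.pi_pos]

lemma cosh_re_eq (z : ℂ) : (Complex.cosh z).re = Real.cosh z.re * Real.cos z.im := by
  conv_lhs => rw [← Complex.re_add_im z, Complex.cosh_add, Complex.cosh_mul_I, Complex.sinh_mul_I]
  simp [← Complex.ofReal_cosh, ← Complex.ofReal_sinh, ← Complex.ofReal_cos, ← Complex.ofReal_sin]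

lemma sinh_re_im_eq (z : ℂ) : (Complex.sinh z).re = Real.sinh z.re * Real.cos z.im ∧
    (Complex.sinh z).im = Real.cosh z.re * Real.sin z.im := by
  constructor <;>
  · conv_lhs =>
      rw [← Complex.re_add_im z, Complex.sinh_add, Complex.cosh_mul_I, Complex.sinh_mul_I]
    simp [← Complex.ofReal_cosh, ← Complex.ofReal_sinh, ← Complex.ofReal_cos,
      ← Complex.ofReal_sin]

lemma sinhDiv_ne_zero {l : ℂ} {h : ℝ} (hh : 0 < h) (him : |(l * h).im| < Real.pi / 2) :
    sinhDiv l h ≠ 0 := by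
  intro h0
  have hs : Complex.sinh (l * h) = 0 := by rw [← mul_sinhDiv, h0, mul_zero]
  obtain ⟨hlo, hhi⟩ := abs_lt.mp him
  obtain ⟨hre, him'⟩ := sinh_re_im_eq (l * h)
  rw [hs, Complex.zero_re] at hre
  rw [hs, Complex.zero_im] at him'
  have hcos : Real.cos (l * h).im ≠ 0 := (Real.cos_pos_of_mem_Ioo ⟨by linarith, hhi⟩).ne'
  have hx : (l * h).re = 0 := by
    rcases mul_eq_zero.mp hre.symm with h1 | h1
    · exact Real.sinh_eq_zero.mp h1
    · exact absurd h1 hcos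
  have hy : (l * h).im = 0 := by
    rcases mul_eq_zero.mp him'.symm with h1 | h1
    · exact absurd h1 (Real.cosh_pos _).ne'
    · exact (Real.sin_eq_zero_iff_of_lt_of_lt (by linarith [Real.pi_pos])
        (by linarith [Real.pi_pos])).mp h1
  have hh' : (h : ℂ) ≠ 0 := by exact_mod_cast hh.ne'
  have hl : l = 0 := by
    have : l * h = 0 := Complex.ext hx hy
    exact (mul_eq_zero.mp this).resolve_right hh'
  simp [sinhDiv, hl, hh.ne'] at h0

/-- For `0 < |α₁ + α₂| < 2` and `0 < d < 2 arctan √(4/(α₁+α₂)² − 1)`, and every `λ ∈ ℂ`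
with `−1 ≤ Im λ ≤ 1`, the only twice continuously differentiable `u : [0, d] → ℂ` with
`u'' = λ² u` and the nonlocal boundary conditions `u(0) = α₁ u(d/2)`, `u(d) = α₂ u(d/2)`
is the zero function. -/
theorem stmt_3 (α₁ α₂ : ℝ) (hα0 : 0 < |α₁ + α₂|) (hα2 : |α₁ + α₂| < 2)
    (d : ℝ) (hd0 : 0 < d)
    (hd : d < 2 * Real.arctan (Real.sqrt (4 / (α₁ + α₂) ^ 2 - 1)))
    (lam : ℂ) (him1 : -1 ≤ lam.im) (him2 : lam.im ≤ 1)
    (u : ℝ → ℂ) (hu : ContDiffOn ℝ 2 u (Set.Icc 0 d))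
    (heq : ∀ φ ∈ Set.Icc (0 : ℝ) d,
      derivWithin (derivWithin u (Set.Icc 0 d)) (Set.Icc 0 d) φ = lam ^ 2 * u φ)
    (hbc1 : u 0 = (α₁ : ℂ) * u (d / 2))
    (hbc2 : u d = (α₂ : ℂ) * u (d / 2)) :
    ∀ φ ∈ Set.Icc (0 : ℝ) d, u φ = 0 := by
  have hrep := fun t (ht : t ∈ Set.Icc 0 d) =>
    midpoint_representation hd0 hu heq (h := d / 2) ⟨by linarith, by linarith⟩ ht
  have hr0 := hrep 0 ⟨le_rfl, hd0.le⟩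
  have hrd := hrep d ⟨hd0.le, le_rfl⟩
  rw [show (0 : ℝ) - d / 2 = -(d / 2) by ring, sinhDiv_neg, Complex.ofReal_neg, mul_neg,
    Complex.cosh_neg, hbc1] at hr0
  rw [show d - d / 2 = d / 2 by ring, hbc2] at hrd
  have him : |(lam * (d / 2 : ℝ)).im| < Real.arctan (Real.sqrt (4 / (α₁ + α₂) ^ 2 - 1)) := by
    have h1 : |lam.im| ≤ 1 := abs_le.mpr ⟨him1, him2⟩
    have h2 : |lam.im| * (d / 2) ≤ 1 * (d / 2) := by gcongr
    rw [Complex.im_mul_ofReal, abs_mul, abs_of_pos (show 0 < d / 2 by linarith)]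
    linarith
  have hmid : u (d / 2) = 0 := by
    by_contra hne
    have hch : Complex.cosh (lam * (d / 2 : ℝ)) = (((α₁ + α₂) / 2 : ℝ) : ℂ) := by
      apply mul_left_cancel₀ hne
      push_cast at hr0 hrd ⊢
      linear_combination -(hr0 + hrd) / 2
    have hre := congrArg Complex.re hch
    rw [cosh_re_eq, Complex.ofReal_re] at hre
    have hc := cos_gt_of_lt_arctan hα0 hα2 him
    nlinarith [Real.one_le_cosh (lam * (d / 2 : ℝ)).re, le_abs_self (α₁ + α₂)]
  have hder : derivWithin u (Set.Icc 0 d) (d / 2) = 0 := by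
    rw [hmid] at hrd
    have h0 : derivWithin u (Set.Icc 0 d) (d / 2) * sinhDiv lam (d / 2) = 0 := by
      linear_combination -hrd
    exact (mul_eq_zero.mp h0).resolve_right
      (sinhDiv_ne_zero (by linarith) (him.trans (Real.arctan_lt_pi_div_two _)))
  intro φ hφ
  rw [hrep φ hφ, hmid, hder]
  simp
end

section
/- Let H be a complex Hilbert space, let I denote the identity operator on H, let d ≥ 1 be an integer, and let P₀ > 0. Let M_ε(p) and S_ε(p), for ε > 0 and p ∈ ℝ^d with |p| ≥ P₀, be families of bounded linear operators on H such that ‖M_ε(p)‖ ≤ c₁·ε, ‖S_ε(p)‖ ≤ c₂, and ‖S_ε(p)²‖ ≤ c₃·|p|⁻¹, where c₁, c₂, c₃ > 0 do not depend on ε and p. Then there exist ε₀ > 0, p₁ ≥ P₀, and c₄ > 0 such that for every 0 < ε ≤ ε₀ and every p ∈ ℝ^d with |p| ≥ p₁, the operator L_ε(p) = I + M_ε(p) + S_ε(p) is bijective with bounded inverse, and ‖L_ε(p)⁻¹‖ ≤ c₄, where c₄ does not depend on ε and p. -/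
/-!
Write `L = 1 + M + S`. Multiplying by `1 - S` on either side removes the term in `S`, which is only
bounded, and leaves its square, which is small:
`(1 - S) L = 1 - (S² - (1 - S) M)` and `L (1 - S) = 1 - (S² - M (1 - S))`.
Both right-hand sides are invertible by the Neumann series once `‖S²‖` and `(1 + ‖S‖) ‖M‖` are at
most `1/4`, so `L` has a left and a right inverse, which then agree. The inverse `B` satisfies
`B = (1 - S) + R B` with `‖R‖ ≤ 1/2`, whence `‖B‖ ≤ 2 (1 + ‖S‖)`. The argument only uses the
Banach algebra structure and is carried out there in `exists_inverse_of_small_sq`.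
-/

open ContinuousLinearMap

/-- Invertibility of `1 + M + S` in a complete normed ring, with an explicit bound on the inverse,
when `M` and `S * S` (but not necessarily `S`) are small. Assuming `‖1‖ ≤ 1` rather than
`NormOneClass` keeps the zero ring, that is, operators on the trivial space. -/
theorem exists_inverse_of_small_sq {A : Type*} [NormedRing A] [CompleteSpace A]
    (h1 : ‖(1 : A)‖ ≤ 1) (M S : A) (c : ℝ) (hS : ‖S‖ ≤ c) (hS2 : ‖S * S‖ ≤ 1 / 4)
    (hM : (1 + c) * ‖M‖ ≤ 1 / 4) :
    ∃ B : A, B * (1 + M + S) = 1 ∧ (1 + M + S) * B = 1 ∧ ‖B‖ ≤ 2 * (1 + c) := by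
  have h1S : ‖1 - S‖ ≤ 1 + c := (norm_sub_le _ _).trans (add_le_add h1 hS)
  have hR₁ : ‖S * S - (1 - S) * M‖ ≤ 1 / 2 := by
    have h := norm_sub_le (S * S) ((1 - S) * M)
    have h' := norm_mul_le (1 - S) M
    have h'' := mul_le_mul_of_nonneg_right h1S (norm_nonneg M)
    linarith
  have hR₂ : ‖S * S - M * (1 - S)‖ ≤ 1 / 2 := by
    have h := norm_sub_le (S * S) (M * (1 - S))
    have h' := norm_mul_le M (1 - S)
    have h'' := mul_le_mul_of_nonneg_right h1S (norm_nonneg M)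
    linarith
  obtain ⟨U, hU⟩ := isUnit_one_sub_of_norm_lt_one (hR₁.trans_lt (by norm_num))
  obtain ⟨V, hV⟩ := isUnit_one_sub_of_norm_lt_one (hR₂.trans_lt (by norm_num))
  have hleft : (↑U⁻¹ * (1 - S)) * (1 + M + S) = 1 := by
    have : (1 - S) * (1 + M + S) = U := by rw [hU]; noncomm_ring
    rw [mul_assoc, this, Units.inv_mul]
  have hright : (1 + M + S) * ((1 - S) * ↑V⁻¹) = 1 := by
    have : (1 + M + S) * (1 - S) = V := by rw [hV]; noncomm_ring
    rw [← mul_assoc, this, Units.mul_inv]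
  refine ⟨↑U⁻¹ * (1 - S), hleft, ?_, ?_⟩
  · rw [left_inv_eq_right_inv hleft hright, hright]
  · set B : A := ↑U⁻¹ * (1 - S) with hB
    have hUB : (1 - (S * S - (1 - S) * M)) * B = 1 - S := by
      rw [← hU, hB, Units.mul_inv_cancel_left]
    have hfix : B = (1 - S) + (S * S - (1 - S) * M) * B := by
      rw [sub_mul, one_mul] at hUB
      exact sub_eq_iff_eq_add.mp hUB
    have h : ‖B‖ ≤ ‖1 - S‖ + ‖(S * S - (1 - S) * M) * B‖ :=
      (congrArg norm hfix).trans_le (norm_add_le _ _)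
    have h' := norm_mul_le (S * S - (1 - S) * M) B
    have h'' := mul_le_mul_of_nonneg_right hR₁ (norm_nonneg B)
    linarith

/-- Abstract invertibility lemma with a parameter (Lemma 8.1): if `‖M ε p‖ ≤ c₁ ε`,
`‖S ε p‖ ≤ c₂` and `‖S ε p ∘ S ε p‖ ≤ c₃ |p|⁻¹` for `ε > 0`, `|p| ≥ P₀`, then for
sufficiently small `ε` and sufficiently large `|p|`, `I + M ε p + S ε p` is invertible
with inverse uniformly bounded by some `c₄`. -/
theorem stmt_5 (H : Type*) [NormedAddCommGroup H] [InnerProductSpace ℂ H] [CompleteSpace H]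
    (d : ℕ) (hd : 1 ≤ d) (P₀ : ℝ) (hP₀ : 0 < P₀)
    (M S : ℝ → EuclideanSpace ℝ (Fin d) → (H →L[ℂ] H))
    (c₁ c₂ c₃ : ℝ) (hc₁ : 0 < c₁) (hc₂ : 0 < c₂) (hc₃ : 0 < c₃)
    (hM : ∀ (ε : ℝ), 0 < ε → ∀ p : EuclideanSpace ℝ (Fin d), P₀ ≤ ‖p‖ →
      ‖M ε p‖ ≤ c₁ * ε)
    (hS : ∀ (ε : ℝ), 0 < ε → ∀ p : EuclideanSpace ℝ (Fin d), P₀ ≤ ‖p‖ →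
      ‖S ε p‖ ≤ c₂)
    (hS2 : ∀ (ε : ℝ), 0 < ε → ∀ p : EuclideanSpace ℝ (Fin d), P₀ ≤ ‖p‖ →
      ‖(S ε p).comp (S ε p)‖ ≤ c₃ * ‖p‖⁻¹) :
    ∃ ε₀ > (0 : ℝ), ∃ p₁ : ℝ, P₀ ≤ p₁ ∧ ∃ c₄ > (0 : ℝ),
      ∀ (ε : ℝ), 0 < ε → ε ≤ ε₀ → ∀ p : EuclideanSpace ℝ (Fin d), p₁ ≤ ‖p‖ →
        ∃ Linv : H →L[ℂ] H,
          Linv.comp (ContinuousLinearMap.id ℂ H + M ε p + S ε p) =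
            ContinuousLinearMap.id ℂ H ∧
          (ContinuousLinearMap.id ℂ H + M ε p + S ε p).comp Linv =
            ContinuousLinearMap.id ℂ H ∧
          ‖Linv‖ ≤ c₄ := by
  -- The thresholds make each of `‖S²‖` and `(1 + c₂) ‖M‖` at most `1/4`.
  refine ⟨1 / (4 * c₁ * (1 + c₂)), by positivity, max P₀ (4 * c₃), le_max_left _ _,
    2 * (1 + c₂), by positivity, ?_⟩
  intro ε hε hε₀ p hp
  have hpP : P₀ ≤ ‖p‖ := (le_max_left _ _).trans hp
  have hpc : 4 * c₃ ≤ ‖p‖ := (le_max_right _ _).trans hp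
  have hp0 : 0 < ‖p‖ := hP₀.trans_le hpP
  refine exists_inverse_of_small_sq (A := H →L[ℂ] H) ContinuousLinearMap.norm_id_le
    (M ε p) (S ε p) c₂ (hS ε hε p hpP) ((hS2 ε hε p hpP).trans ?_) ?_
  · rw [← div_eq_mul_inv, div_le_iff₀ hp0]
    linarith
  · rw [le_div_iff₀ (by positivity)] at hε₀
    have h := mul_le_mul_of_nonneg_left (hM ε hε p hpP) (by positivity : 0 ≤ 1 + c₂)
    linarith
end
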